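/- Fix integers d ≥ 1 and p ≥ 1, let σ satisfy Assumption A, let f ∈ Π_p(ℝ^d), and let U ⊊ ℝ^d be a set whose complement U^c = ℝ^d ∖ U is nonempty. Let F_int = {g ∈ Π_p(ℝ^d) : g(x) = f(x) for all x ∈ U^c} (a nonempty affine set containing f) and let p* = min{deg g : g ∈ F_int}. For every ε > 0 such that Φ(ε) is positive definite, let g_ε denote the unique minimizer over g ∈ F_int of the quadratic form ĝᵀ Φ(ε)^{−1} ĝ, where ĝ = (⟨g, χ_T⟩_{L²(γ_d)})_{T ∈ ℕ^d_{≤p}} is the vector of Hermite coefficients of g. Then there exist C > 0 and ε₀ > 0 such that for all ε ∈ (0, ε₀): Φ(ε) is positive definite, and for every integer k with p* < k ≤ p one has Σ_{T ∈ ℕ^d, |T| = k} ⟨g_ε, χ_T⟩_{L²(γ_d)}² ≤ C ε^{k − p*}. In particular, the L²(γ_d)-distance from g_ε to Π_{p*}(ℝ^d) tends to 0 as ε → 0. -/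

import Mathlib

open MeasureTheory ProbabilityTheory

/-- The standard Gaussian measure `N(0, I_d)` on `ℝ^d`. -/
noncomputable def gaussD (d : ℕ) : Measure (Fin d → ℝ) :=
  Measure.pi fun _ => gaussianReal 0 1

/-- The normalized (probabilists') Hermite polynomial `H_t = He_t / √(t!)` evaluated at `y`. -/
noncomputable def hermN (t : ℕ) (y : ℝ) : ℝ :=
  (Polynomial.aeval y (Polynomial.hermite t)) / Real.sqrt (Nat.factorial t)

/-- The multivariate Hermite polynomial `χ_T(x) = ∏ i, H_{T i}(x i)`. -/
noncomputable def chiH {d : ℕ} (T : Fin d → ℕ) (x : Fin d → ℝ) : ℝ :=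
  ∏ i, hermN (T i) (x i)

/-- The Hermite coefficient `φ̂_{w,b}(T) = ∫ σ(⟨w,x⟩ + b) χ_T(x) dγ_d(x)`
of the random feature `φ_{w,b}(x) = σ(⟨w,x⟩ + b)`. -/
noncomputable def phiHat (d : ℕ) (σ : ℝ → ℝ) (w : Fin d → ℝ) (b : ℝ)
    (T : Fin d → ℕ) : ℝ :=
  ∫ x, σ (∑ i, w i * x i + b) * chiH T x ∂(gaussD d)

/-- The law of a feature pair `(w, b)` with `w ∼ N(0, v I_d)` and `b ∼ N(0, v)` independent. -/
noncomputable def featMeas (d : ℕ) (v : NNReal) : Measure ((Fin d → ℝ) × ℝ) :=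
  (Measure.pi fun _ : Fin d => gaussianReal 0 v).prod (gaussianReal 0 v)

/-- The index set `ℕ^d_{≤p}` of multi-indices of total degree at most `p`
(each coordinate then being at most `p`, so we may record it in `Fin (p+1)`). -/
abbrev MIdx (d p : ℕ) := {T : Fin d → Fin (p + 1) // (∑ i, (T i : ℕ)) ≤ p}

/-- The multi-index in `ℕ^d` corresponding to an element of `MIdx d p`. -/
def MIdx.toFun {d p : ℕ} (T : MIdx d p) : Fin d → ℕ := fun i => (T.1 i : ℕ)

/-- The matrix `Φ(ε)` with entries `Φ(ε)_{T,T'} = E_{w,b}[φ̂_{w,b}(T) φ̂_{w,b}(T')]`,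
where `w ∼ N(0, ε I_d)` and `b ∼ N(0, ε)` are independent. -/
noncomputable def PhiMat (d p : ℕ) (σ : ℝ → ℝ) (ε : ℝ) :
    Matrix (MIdx d p) (MIdx d p) ℝ := fun T T' =>
  ∫ wb : (Fin d → ℝ) × ℝ,
    phiHat d σ wb.1 wb.2 T.toFun * phiHat d σ wb.1 wb.2 T'.toFun
      ∂(featMeas d ε.toNNReal)

/-- The vector of Hermite coefficients `ĝ = (⟨g, χ_T⟩_{L²(γ_d)})_{T ∈ ℕ^d_{≤p}}`
of a polynomial `G`. -/
noncomputable def hermVec (d p : ℕ) (G : MvPolynomial (Fin d) ℝ) : MIdx d p → ℝ :=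
  fun T => ∫ x, MvPolynomial.eval x G * chiH T.toFun x ∂(gaussD d)

/-- The set `F_int` of polynomials of total degree at most `p` interpolating the
target `F` on `Uᶜ`. -/
def interpPolys (d p : ℕ) (U : Set (Fin d → ℝ)) (F : MvPolynomial (Fin d) ℝ) :
    Set (MvPolynomial (Fin d) ℝ) :=
  {G | G.totalDegree ≤ p ∧ ∀ x ∈ Uᶜ, MvPolynomial.eval x G = MvPolynomial.eval x F}

/-- `p*`: the minimal total degree over `F_int`. -/
noncomputable def minInterpDeg (d p : ℕ) (U : Set (Fin d → ℝ))
    (F : MvPolynomial (Fin d) ℝ) : ℕ :=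
  sInf {k : ℕ | ∃ G ∈ interpPolys d p U F, G.totalDegree = k}

open Matrix in
/-- The quadratic form `ĝᵀ Φ(ε)⁻¹ ĝ`. -/
noncomputable def quadForm (d p : ℕ) (σ : ℝ → ℝ) (ε : ℝ)
    (G : MvPolynomial (Fin d) ℝ) : ℝ :=
  hermVec d p G ⬝ᵥ ((PhiMat d p σ ε)⁻¹ *ᵥ hermVec d p G)

open Finset Filter Topology Matrix
open scoped ENNReal NNReal Nat

/-! Gaussian integration by parts turns the Hermite coefficient of a feature into
`φ̂_{w,b}(T) = (T!)^{-1/2} w^T E_x[σ^{(|T|)}(⟨w, x⟩ + b)]`. Writing `ε = s²` and rescaling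
`(w, b)` by `s` therefore factors `Φ(ε) = D M(s) D`, where `D = diag(s^{|T|})` and `M` is continuous
in `s`. At `s = 0` the derivative is evaluated at `0`, so `M(0)` is the Gram matrix in `L²(γ_d)` of
nonzero multiples of the monomials `x^T`, hence positive definite. Consequently `ĝᵀ Φ(ε)⁻¹ ĝ` is
comparable to `Σ_T ĝ_T² / ε^{|T|}`, uniformly for small `ε`. An interpolant of degree `p*` has
energy `O(ε^{-p*})`, so the minimizer has too, and each of its coefficients of degree `k` satisfies
`ĝ_T² = O(ε^{k - p*})`. -/

section FiniteMoments

variable {α β : Type*} [MeasurableSpace α] [MeasurableSpace β]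

/-- The algebra of functions all of whose absolute moments under `μ` are finite. -/
def momentAlgebra (μ : Measure α) [IsFiniteMeasure μ] : Subalgebra ℝ (α → ℝ) where
  carrier := {f | ∀ q : ℕ, MemLp f q μ}
  add_mem' hf hg q := (hf q).add (hg q)
  mul_mem' hf hg q := by
    have : ENNReal.HolderTriple (2 * q : ℕ) (2 * q : ℕ) q := by
      constructor
      rw [← two_mul, Nat.cast_mul, Nat.cast_ofNat,
        ENNReal.mul_inv (.inl two_ne_zero) (.inl ENNReal.ofNat_ne_top), ← mul_assoc,
        ENNReal.mul_inv_cancel two_ne_zero ENNReal.ofNat_ne_top, one_mul]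
    exact (hg (2 * q)).mul (hf (2 * q))
  algebraMap_mem' c _ := memLp_const c

lemma integrable_integral_mul_integral {μ : Measure α} {ν : Measure β} [SFinite ν]
    {f g : α → β → ℝ}
    (h : Integrable (fun z : α × β × β => f z.1 z.2.1 * g z.1 z.2.2) (μ.prod (ν.prod ν))) :
    Integrable (fun a => (∫ b, f a b ∂ν) * ∫ b, g a b ∂ν) μ := by
  simpa only [integral_prod_mul] using h.integral_prod_left

variable {μ : Measure α} [IsFiniteMeasure μ]

lemma integrable_of_mem_momentAlgebra {f : α → ℝ} (hf : f ∈ momentAlgebra μ) :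
    Integrable f μ :=
  memLp_one_iff_integrable.mp (by simpa using hf 1)

lemma comp_mem_momentAlgebra {ν : Measure β} [IsFiniteMeasure ν] {f : α → ℝ} {e : β → α}
    (hf : f ∈ momentAlgebra μ) (he : MeasurePreserving e ν μ) : f ∘ e ∈ momentAlgebra ν :=
  fun q => (hf q).comp_measurePreserving he

lemma id_mem_momentAlgebra_gaussianReal (m : ℝ) (v : ℝ≥0) :
    id ∈ momentAlgebra (gaussianReal m v) :=
  fun q => memLp_id_gaussianReal' q (ENNReal.natCast_ne_top q)

lemma polynomial_eval_mem_momentAlgebra {f : α → ℝ} (hf : f ∈ momentAlgebra μ)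
    (P : Polynomial ℝ) : (fun a => P.eval (f a)) ∈ momentAlgebra μ := by
  convert (Polynomial.aeval (⟨f, hf⟩ : momentAlgebra μ) P).2 using 1
  ext a
  simp

lemma mvPolynomial_eval_mem_momentAlgebra {ι : Type*} {f : ι → α → ℝ}
    (hf : ∀ i, f i ∈ momentAlgebra μ) (G : MvPolynomial ι ℝ) :
    (fun a => MvPolynomial.eval (f · a) G) ∈ momentAlgebra μ := by
  convert (MvPolynomial.aeval (fun i => (⟨f i, hf i⟩ : momentAlgebra μ)) G).2 using 1
  ext a
  induction G using MvPolynomial.induction_on <;> simp_all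

lemma coord_mem_momentAlgebra_pi {ι : Type*} [Fintype ι] (v : ℝ≥0) (i : ι) :
    (fun x : ι → ℝ => x i) ∈ momentAlgebra (Measure.pi fun _ : ι => gaussianReal 0 v) :=
  comp_mem_momentAlgebra (id_mem_momentAlgebra_gaussianReal 0 v)
    (measurePreserving_eval (fun _ : ι => gaussianReal 0 v) i)

instance (d : ℕ) : IsProbabilityMeasure (gaussD d) := by
  unfold gaussD; infer_instance

instance (d : ℕ) (v : ℝ≥0) : IsProbabilityMeasure (featMeas d v) := by
  unfold featMeas; infer_instance

lemma integrable_eval_gaussD {d : ℕ} (G : MvPolynomial (Fin d) ℝ) :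
    Integrable (fun x => MvPolynomial.eval x G) (gaussD d) :=
  integrable_of_mem_momentAlgebra
    (mvPolynomial_eval_mem_momentAlgebra (coord_mem_momentAlgebra_pi 1) G)

end FiniteMoments

section SteinIdentity

lemma hasDerivAt_gaussianPDFReal (m : ℝ) (v : ℝ≥0) (y : ℝ) :
    HasDerivAt (gaussianPDFReal m v) (-((y - m) / v) * gaussianPDFReal m v y) y := by
  have h : HasDerivAt (fun x : ℝ => -(x - m) ^ 2 / (2 * v)) (-((y - m) / v)) y :=
    ((((hasDerivAt_id y).sub_const m).pow 2).neg.div_const _).congr_deriv (by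
      simp only [id_eq]; ring)
  rw [gaussianPDFReal_def]
  exact (h.exp.const_mul _).congr_deriv (by ring)

lemma integrable_eval_mul_gaussianPDFReal (m : ℝ) {v : ℝ≥0} (hv : v ≠ 0) (P : Polynomial ℝ) :
    Integrable fun y => P.eval y * gaussianPDFReal m v y := by
  have h : Integrable (fun y => P.eval y) (gaussianReal m v) := integrable_of_mem_momentAlgebra
    (polynomial_eval_mem_momentAlgebra (id_mem_momentAlgebra_gaussianReal m v) P)
  rw [gaussianReal_of_var_ne_zero m hv,
    integrable_withDensity_iff_integrable_smul' (measurable_gaussianPDF _ _)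
      (Eventually.of_forall fun _ => gaussianPDF_lt_top)] at h
  simpa [mul_comm] using h

theorem integral_sub_mul_eval_gaussianReal (m : ℝ) (v : ℝ≥0) (P : Polynomial ℝ) :
    ∫ y, (y - m) * P.eval y ∂(gaussianReal m v)
      = v * ∫ y, P.derivative.eval y ∂(gaussianReal m v) := by
  rcases eq_or_ne v 0 with rfl | hv
  · simp [gaussianReal_zero_var]
  have hv' : (v : ℝ) ≠ 0 := NNReal.coe_ne_zero.mpr hv
  let Q := P * Polynomial.C (-(v : ℝ)⁻¹) * (Polynomial.X - Polynomial.C m)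
  have hQ : (fun y => P.eval y) * (fun y => -((y - m) / v) * gaussianPDFReal m v y)
      = fun y => Q.eval y * gaussianPDFReal m v y := by
    ext y; simp only [Q, Pi.mul_apply, Polynomial.eval_mul, Polynomial.eval_sub, Polynomial.eval_C,
      Polynomial.eval_X]; ring
  have hparts := integral_mul_deriv_eq_deriv_mul_of_integrable
    (u := fun y => P.eval y) (fun y _ => P.hasDerivAt y)
    (fun y _ => hasDerivAt_gaussianPDFReal m v y)
    (hQ ▸ integrable_eval_mul_gaussianPDFReal m hv Q)
    (integrable_eval_mul_gaussianPDFReal m hv P.derivative)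
    (integrable_eval_mul_gaussianPDFReal m hv P)
  simp only [integral_gaussianReal_eq_integral_smul hv, smul_eq_mul]
  calc ∫ y, gaussianPDFReal m v y * ((y - m) * P.eval y)
      = -v * ∫ y, P.eval y * (-((y - m) / v) * gaussianPDFReal m v y) := by
        rw [← integral_const_mul]; congr with y; field_simp
    _ = v * ∫ y, gaussianPDFReal m v y * P.derivative.eval y := by
        rw [hparts, neg_mul_neg]; simp only [mul_comm]

lemma integral_pow_succ_gaussianReal (n : ℕ) :
    ∫ y, y ^ (n + 1) ∂(gaussianReal 0 1) = n * ∫ y, y ^ (n - 1) ∂(gaussianReal 0 1) := by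
  simpa [pow_succ', Polynomial.derivative_X_pow, integral_const_mul] using
    integral_sub_mul_eval_gaussianReal 0 1 (Polynomial.X ^ n)

variable {d : ℕ}

/-- The mean `G ↦ ∫ G dγ_d`, as a linear functional on polynomials. -/
noncomputable def gaussMean (d : ℕ) : MvPolynomial (Fin d) ℝ →ₗ[ℝ] ℝ where
  toFun G := ∫ x, MvPolynomial.eval x G ∂(gaussD d)
  map_add' G H := by
    simpa only [map_add] using
      integral_add (integrable_eval_gaussD G) (integrable_eval_gaussD H)
  map_smul' c G := by
    simp only [MvPolynomial.smul_eval, integral_const_mul, RingHom.id_apply, smul_eq_mul]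

lemma gaussMean_apply (G : MvPolynomial (Fin d) ℝ) :
    gaussMean d G = ∫ x, MvPolynomial.eval x G ∂(gaussD d) := rfl

lemma gaussMean_C (c : ℝ) : gaussMean d (MvPolynomial.C c) = c := by
  simp [gaussMean_apply]

lemma gaussMean_monomial (S : Fin d →₀ ℕ) (c : ℝ) :
    gaussMean d (MvPolynomial.monomial S c) = c * ∏ i, ∫ y, y ^ S i ∂(gaussianReal 0 1) := by
  simp only [gaussMean_apply, MvPolynomial.eval_monomial, integral_const_mul, gaussD,
    Finsupp.prod_pow, integral_fintype_prod_eq_prod (fun i (y : ℝ) => y ^ S i)]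

theorem gaussMean_X_mul (i : Fin d) (G : MvPolynomial (Fin d) ℝ) :
    gaussMean d (MvPolynomial.X i * G) = gaussMean d (MvPolynomial.pderiv i G) := by
  induction G using MvPolynomial.induction_on' with
  | add G H hG hH => simp only [mul_add, map_add, hG, hH]
  | monomial S c =>
    have hprod (S' : Fin d →₀ ℕ) (hS' : ∀ j ≠ i, S' j = S j) :
        ∏ j, ∫ y, y ^ S' j ∂(gaussianReal 0 1) = (∫ y, y ^ S' i ∂(gaussianReal 0 1)) *
          ∏ j ∈ univ.erase i, ∫ y, y ^ S j ∂(gaussianReal 0 1) := by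
      rw [← mul_prod_erase _ _ (mem_univ i)]
      exact congrArg _ (prod_congr rfl fun j hj => by rw [hS' j (ne_of_mem_erase hj)])
    rw [MvPolynomial.X, MvPolynomial.monomial_mul, one_mul, MvPolynomial.pderiv_monomial,
      gaussMean_monomial, gaussMean_monomial, hprod, hprod]
    · simp [add_comm 1, integral_pow_succ_gaussianReal, mul_assoc]
    · intro j hj; simp [Finsupp.single_eq_of_ne hj]
    · intro j hj; simp [Finsupp.single_eq_of_ne hj]

end SteinIdentity

section HermitePolynomials

variable {d : ℕ}

theorem finsupp_nat_induction {ι : Type*} {motive : (ι →₀ ℕ) → Prop} (zero : motive 0)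
    (add_single : ∀ T i, motive T → motive (T + Finsupp.single i 1)) (T : ι →₀ ℕ) : motive T := by
  induction T using Finsupp.induction with
  | zero => exact zero
  | single_add i n T _ _ ih =>
    clear * - add_single ih
    induction n with
    | zero => simpa using ih
    | succ n ihn =>
      rw [Finsupp.single_add, add_right_comm]
      exact add_single _ i ihn

lemma degree_add_single {ι : Type*} (T : ι →₀ ℕ) (i : ι) :
    (T + Finsupp.single i 1).degree = T.degree + 1 := by
  rw [map_add, Finsupp.degree_single]

lemma prod_factorial_add_single (T : Fin d →₀ ℕ) (i : Fin d) :
    ∏ j, ((T + Finsupp.single i 1 : Fin d →₀ ℕ) j)! = (T i + 1) * ∏ j, (T j)! := by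
  rw [← mul_prod_erase _ _ (mem_univ i), ← mul_prod_erase univ (fun j => (T j)!) (mem_univ i),
    ← mul_assoc]
  congr 1
  · simp [Nat.factorial_succ]
  · exact prod_congr rfl fun j hj => by simp [Finsupp.single_eq_of_ne (ne_of_mem_erase hj)]

lemma totalDegree_le_iff_coeff_eq_zero {ι : Type*} {G : MvPolynomial ι ℝ} {m : ℕ} :
    G.totalDegree ≤ m ↔ ∀ T : ι →₀ ℕ, m < T.degree → G.coeff T = 0 := by
  simp only [MvPolynomial.totalDegree, Finset.sup_le_iff, MvPolynomial.mem_support_iff]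
  exact forall_congr' fun T => by rw [← not_lt, not_imp_not]; rfl

lemma totalDegree_pderiv_le {ι : Type*} {i : ι} {G : MvPolynomial ι ℝ} {m : ℕ}
    (hG : G.totalDegree ≤ m + 1) : (MvPolynomial.pderiv i G).totalDegree ≤ m := by
  rw [totalDegree_le_iff_coeff_eq_zero] at hG ⊢
  intro T hT
  rw [MvPolynomial.coeff_pderiv, hG _ (by rw [degree_add_single]; omega), zero_mul]

/-- The (unnormalized) multivariate Hermite polynomial `∏ i, He_{T i}(x i)`. -/
noncomputable def hermitePoly (T : Fin d →₀ ℕ) : MvPolynomial (Fin d) ℝ :=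
  ∏ i, Polynomial.aeval (MvPolynomial.X i) (Polynomial.hermite (T i))

lemma hermitePoly_zero : hermitePoly (0 : Fin d →₀ ℕ) = 1 := by
  simp [hermitePoly]

lemma hermitePoly_add_single (T : Fin d →₀ ℕ) (i : Fin d) :
    hermitePoly (T + Finsupp.single i 1)
      = MvPolynomial.X i * hermitePoly T - MvPolynomial.pderiv i (hermitePoly T) := by
  let He (T : Fin d →₀ ℕ) (j : Fin d) : MvPolynomial (Fin d) ℝ :=
    Polynomial.aeval (MvPolynomial.X j) (Polynomial.hermite (T j))
  let R := ∏ j ∈ univ.erase i, He T j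
  have hpderiv (j : Fin d) (P : Polynomial ℤ) :
      MvPolynomial.pderiv i (Polynomial.aeval (MvPolynomial.X j : MvPolynomial (Fin d) ℝ) P)
        = Polynomial.aeval (MvPolynomial.X j) (Polynomial.derivative P)
          * MvPolynomial.pderiv i (MvPolynomial.X j) :=
    ((MvPolynomial.pderiv i).restrictScalars ℤ).map_aeval P _
  have hR : MvPolynomial.pderiv i R = 0 := by
    refine prod_induction _ (fun Q => MvPolynomial.pderiv i Q = 0) (fun P Q hP hQ => ?_)
      MvPolynomial.pderiv_one fun j hj => ?_
    · rw [MvPolynomial.pderiv_mul, hP, hQ, zero_mul, mul_zero, add_zero]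
    · rw [hpderiv, MvPolynomial.pderiv_X_of_ne (ne_of_mem_erase hj), mul_zero]
  have hT : hermitePoly T = He T i * R := (mul_prod_erase _ _ (mem_univ i)).symm
  have hT' : hermitePoly (T + Finsupp.single i 1) = He (T + Finsupp.single i 1) i * R :=
    (mul_prod_erase _ _ (mem_univ i)).symm.trans <| congrArg _ <|
      prod_congr rfl fun j hj => by simp [He, Finsupp.single_eq_of_ne (ne_of_mem_erase hj)]
  rw [hT', hT, MvPolynomial.pderiv_mul, hR, hpderiv]
  simp only [He, Finsupp.add_apply, Finsupp.single_eq_same, Polynomial.hermite_succ, map_sub,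
    map_mul, Polynomial.aeval_X, MvPolynomial.pderiv_X_self]
  ring

theorem gaussMean_mul_hermitePoly_add_single (G : MvPolynomial (Fin d) ℝ) (T : Fin d →₀ ℕ)
    (i : Fin d) : gaussMean d (G * hermitePoly (T + Finsupp.single i 1))
      = gaussMean d (MvPolynomial.pderiv i G * hermitePoly T) := by
  have hsplit : G * hermitePoly (T + Finsupp.single i 1)
      = MvPolynomial.X i * (G * hermitePoly T)
        - G * MvPolynomial.pderiv i (hermitePoly T) := by
    rw [hermitePoly_add_single]; ring
  rw [hsplit, map_sub, gaussMean_X_mul, MvPolynomial.pderiv_mul, map_add, add_sub_cancel_right]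

theorem gaussMean_mul_hermitePoly {G : MvPolynomial (Fin d) ℝ} {T : Fin d →₀ ℕ}
    (hG : G.totalDegree ≤ T.degree) :
    gaussMean d (G * hermitePoly T) = (∏ i, (T i)! : ℕ) * G.coeff T := by
  induction T using finsupp_nat_induction generalizing G with
  | zero =>
    rw [map_zero, Nat.le_zero, MvPolynomial.totalDegree_eq_zero_iff_eq_C] at hG
    rw [hG]
    simp [hermitePoly_zero, gaussMean_C]
  | add_single T i ih =>
    rw [degree_add_single] at hG
    rw [gaussMean_mul_hermitePoly_add_single, ih (totalDegree_pderiv_le hG),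
      MvPolynomial.coeff_pderiv, prod_factorial_add_single]
    push_cast
    ring

lemma coeff_hermitePoly {S T : Fin d →₀ ℕ} (h : S.degree ≤ T.degree) :
    (hermitePoly S).coeff T = if S = T then 1 else 0 := by
  induction S using finsupp_nat_induction generalizing T with
  | zero => rw [hermitePoly_zero, MvPolynomial.coeff_one]
  | add_single S i ih =>
    rw [degree_add_single] at h
    have hpderiv : (MvPolynomial.pderiv i (hermitePoly S)).coeff T = 0 := by
      rw [MvPolynomial.coeff_pderiv, ih (by rw [degree_add_single]; omega), if_neg, zero_mul]
      rintro rfl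
      rw [degree_add_single] at h; omega
    rw [hermitePoly_add_single, MvPolynomial.coeff_sub, hpderiv, sub_zero]
    by_cases hi : T i = 0
    · rw [MvPolynomial.coeff_X_mul', if_neg (by simpa using hi), if_neg]
      rintro rfl
      simp at hi
    · have hT : T - Finsupp.single i 1 + Finsupp.single i 1 = T :=
        tsub_add_cancel_of_le (Finsupp.single_le_iff.mpr (Nat.one_le_iff_ne_zero.mpr hi))
      have hdeg := degree_add_single (T - Finsupp.single i 1) i
      rw [hT] at hdeg
      rw [MvPolynomial.coeff_X_mul', if_pos (by simpa using hi), ih (by omega)]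
      simp only [← add_left_inj (Finsupp.single i 1) (b := S), hT]

lemma totalDegree_hermitePoly_le (T : Fin d →₀ ℕ) : (hermitePoly T).totalDegree ≤ T.degree := by
  refine totalDegree_le_iff_coeff_eq_zero.mpr fun S hS => ?_
  rw [coeff_hermitePoly hS.le, if_neg (by rintro rfl; exact hS.false)]

theorem gaussMean_hermitePoly_mul_hermitePoly (S T : Fin d →₀ ℕ) :
    gaussMean d (hermitePoly S * hermitePoly T) = if S = T then ((∏ i, (T i)! : ℕ) : ℝ) else 0 := by
  wlog h : S.degree ≤ T.degree generalizing S T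
  · rw [mul_comm, this T S (le_of_not_ge h)]
    grind
  rw [gaussMean_mul_hermitePoly ((totalDegree_hermitePoly_le S).trans h), coeff_hermitePoly h,
    mul_ite, mul_one, mul_zero]

end HermitePolynomials

section HermiteExpansion

variable {d m p : ℕ}

lemma sqrt_prod_factorial_pos (T : Fin d →₀ ℕ) : 0 < √(∏ i, (T i)! : ℕ) :=
  Real.sqrt_pos.mpr (Nat.cast_pos.mpr (prod_pos fun _ _ => Nat.factorial_pos _))

/-- The normalized multivariate Hermite polynomial, whose polynomial function is `chiH T`. -/
noncomputable def chiPoly (T : Fin d →₀ ℕ) : MvPolynomial (Fin d) ℝ :=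
  (√(∏ i, (T i)! : ℕ))⁻¹ • hermitePoly T

lemma eval_chiPoly (T : Fin d →₀ ℕ) (x : Fin d → ℝ) :
    MvPolynomial.eval x (chiPoly T) = chiH T x := by
  have heval (i : Fin d) (P : Polynomial ℤ) : MvPolynomial.eval x
      (Polynomial.aeval (MvPolynomial.X i : MvPolynomial (Fin d) ℝ) P)
        = Polynomial.aeval (x i) P := by
    simpa using (Polynomial.aeval_algHom_apply ((MvPolynomial.aeval x).restrictScalars ℤ)
      (MvPolynomial.X i : MvPolynomial (Fin d) ℝ) P).symm
  simp only [chiPoly, hermitePoly, chiH, hermN, MvPolynomial.smul_eval, map_prod, heval,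
    prod_div_distrib, Nat.cast_prod, inv_mul_eq_div]
  rw [Real.sqrt_prod _ fun _ _ => Nat.cast_nonneg _]

/-- The Hermite coefficient `G ↦ ⟨G, χ_T⟩_{L²(γ_d)}`, as a linear functional on polynomials. -/
noncomputable def hermiteCoeff (T : Fin d →₀ ℕ) : MvPolynomial (Fin d) ℝ →ₗ[ℝ] ℝ :=
  gaussMean d ∘ₗ LinearMap.mulRight ℝ (chiPoly T)

lemma hermiteCoeff_eq_gaussMean (T : Fin d →₀ ℕ) (G : MvPolynomial (Fin d) ℝ) :
    hermiteCoeff T G = gaussMean d (G * chiPoly T) := rfl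

lemma hermiteCoeff_eq_integral (T : Fin d →₀ ℕ) (G : MvPolynomial (Fin d) ℝ) :
    hermiteCoeff T G = ∫ x, MvPolynomial.eval x G * chiH T x ∂(gaussD d) := by
  simp only [hermiteCoeff_eq_gaussMean, gaussMean_apply, map_mul, eval_chiPoly]

lemma hermiteCoeff_eq_inv_sqrt_mul (T : Fin d →₀ ℕ) (G : MvPolynomial (Fin d) ℝ) :
    hermiteCoeff T G = (√(∏ i, (T i)! : ℕ))⁻¹ * gaussMean d (G * hermitePoly T) := by
  rw [hermiteCoeff_eq_gaussMean, chiPoly, mul_smul_comm, map_smul, smul_eq_mul]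

lemma hermiteCoeff_of_totalDegree_le {G : MvPolynomial (Fin d) ℝ} {T : Fin d →₀ ℕ}
    (hG : G.totalDegree ≤ T.degree) :
    hermiteCoeff T G = √(∏ i, (T i)! : ℕ) * G.coeff T := by
  rw [hermiteCoeff_eq_inv_sqrt_mul, gaussMean_mul_hermitePoly hG, ← mul_assoc,
    inv_mul_eq_div, Real.div_sqrt]

lemma hermiteCoeff_of_totalDegree_lt {G : MvPolynomial (Fin d) ℝ} {T : Fin d →₀ ℕ}
    (hG : G.totalDegree < T.degree) : hermiteCoeff T G = 0 := by
  rw [hermiteCoeff_of_totalDegree_le hG.le, totalDegree_le_iff_coeff_eq_zero.mp le_rfl T hG,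
    mul_zero]

lemma hermiteCoeff_chiPoly (S T : Fin d →₀ ℕ) :
    hermiteCoeff T (chiPoly S) = if S = T then 1 else 0 := by
  rw [hermiteCoeff_eq_inv_sqrt_mul, chiPoly, smul_mul_assoc, map_smul,
    gaussMean_hermitePoly_mul_hermitePoly, smul_eq_mul]
  split_ifs with h
  · subst h
    rw [inv_mul_eq_div (√_) (Nat.cast _), Real.div_sqrt,
      inv_mul_cancel₀ (sqrt_prod_factorial_pos S).ne']
  · rw [mul_zero, mul_zero]

theorem eq_zero_of_hermiteCoeff_eq_zero {G : MvPolynomial (Fin d) ℝ}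
    (h : ∀ T : Fin d →₀ ℕ, T.degree ≤ G.totalDegree → hermiteCoeff T G = 0) : G = 0 := by
  by_contra hG
  obtain ⟨T, hT, hdeg⟩ : ∃ T ∈ G.support, T.degree = G.totalDegree := by
    obtain ⟨T, hT, hdeg⟩ := exists_mem_eq_sup G.support (MvPolynomial.support_nonempty.mpr hG)
      Finsupp.degree
    exact ⟨T, hT, hdeg.symm⟩
  have hT0 := hermiteCoeff_of_totalDegree_le hdeg.ge
  rw [h T hdeg.le] at hT0
  exact MvPolynomial.mem_support_iff.mp hT
    ((mul_eq_zero.mp hT0.symm).resolve_left (sqrt_prod_factorial_pos T).ne')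

/-- The element of `MIdx d p` as a finitely supported function, the form in which
`MvPolynomial` expects its exponents. -/
noncomputable def MIdx.toFinsupp (T : MIdx d p) : Fin d →₀ ℕ :=
  Finsupp.equivFunOnFinite.symm T.toFun

lemma MIdx.coe_toFinsupp (T : MIdx d p) : ⇑T.toFinsupp = T.toFun := rfl

lemma MIdx.degree_toFinsupp (T : MIdx d p) : T.toFinsupp.degree = ∑ i, T.toFun i :=
  Finsupp.degree_eq_sum _

lemma MIdx.degree_toFinsupp_le (T : MIdx d p) : T.toFinsupp.degree ≤ p :=
  T.degree_toFinsupp.trans_le T.2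

lemma MIdx.toFinsupp_injective : Function.Injective (MIdx.toFinsupp : MIdx d p → _) :=
  fun _ _ h => Subtype.ext <| funext fun i => Fin.ext (DFunLike.congr_fun h i)

lemma MIdx.exists_toFinsupp_eq {T : Fin d →₀ ℕ} (hT : T.degree ≤ p) :
    ∃ T' : MIdx d p, T'.toFinsupp = T := by
  have hle (i : Fin d) : T i ≤ p := (Finsupp.le_degree i T).trans hT
  exact ⟨⟨fun i => ⟨T i, Nat.lt_succ_of_le (hle i)⟩, (Finsupp.degree_eq_sum T).symm.trans_le hT⟩,
    by ext; rfl⟩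

/-- The orthogonal projection onto polynomials of degree at most `m`, i.e. the truncation of the
Hermite expansion at degree `m`. -/
noncomputable def hermiteProj (m : ℕ) (G : MvPolynomial (Fin d) ℝ) : MvPolynomial (Fin d) ℝ :=
  ∑ T : MIdx d m, hermiteCoeff T.toFinsupp G • chiPoly T.toFinsupp

lemma totalDegree_hermiteProj_le (G : MvPolynomial (Fin d) ℝ) :
    (hermiteProj m G).totalDegree ≤ m :=
  MvPolynomial.totalDegree_finsetSum_le fun T _ =>
    (MvPolynomial.totalDegree_smul_le _ _).trans <|
      (MvPolynomial.totalDegree_smul_le _ _).trans <|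
        (totalDegree_hermitePoly_le _).trans T.degree_toFinsupp_le

lemma hermiteCoeff_hermiteProj (G : MvPolynomial (Fin d) ℝ) (T : Fin d →₀ ℕ) :
    hermiteCoeff T (hermiteProj m G) = if T.degree ≤ m then hermiteCoeff T G else 0 := by
  split_ifs with hT
  · obtain ⟨T, rfl⟩ := MIdx.exists_toFinsupp_eq hT
    simp only [hermiteProj, map_sum, map_smul, hermiteCoeff_chiPoly,
      MIdx.toFinsupp_injective.eq_iff, smul_eq_mul, mul_ite, mul_one, mul_zero, sum_ite_eq',
      mem_univ, if_true]
  · exact hermiteCoeff_of_totalDegree_lt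
      ((totalDegree_hermiteProj_le G).trans_lt (not_le.mp hT))

theorem hermiteProj_eq_self {G : MvPolynomial (Fin d) ℝ} (hG : G.totalDegree ≤ m) :
    hermiteProj m G = G := by
  refine sub_eq_zero.mp (eq_zero_of_hermiteCoeff_eq_zero fun T hT => ?_)
  have hTm : T.degree ≤ m := hT.trans <|
    (MvPolynomial.totalDegree_sub _ _).trans (max_le (totalDegree_hermiteProj_le G) hG)
  rw [map_sub, hermiteCoeff_hermiteProj, if_pos hTm, sub_self]

theorem gaussMean_mul_self_eq_sum {G : MvPolynomial (Fin d) ℝ} (hG : G.totalDegree ≤ p) :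
    gaussMean d (G * G) = ∑ T : MIdx d p, hermiteCoeff T.toFinsupp G ^ 2 := by
  calc gaussMean d (G * G) = gaussMean d (G * hermiteProj p G) := by rw [hermiteProj_eq_self hG]
    _ = ∑ T : MIdx d p, hermiteCoeff T.toFinsupp G ^ 2 := by
      simp only [hermiteProj, mul_sum, map_sum, mul_smul_comm, map_smul, smul_eq_mul,
        ← hermiteCoeff_eq_gaussMean, ← sq]

lemma gaussMean_mul_self_pos {G : MvPolynomial (Fin d) ℝ} (hG : G ≠ 0) :
    0 < gaussMean d (G * G) := by
  contrapose! hG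
  rw [gaussMean_mul_self_eq_sum le_rfl] at hG
  have h0 := (sum_eq_zero_iff_of_nonneg fun T _ => sq_nonneg _).mp
    (hG.antisymm (sum_nonneg fun T _ => sq_nonneg _))
  refine eq_zero_of_hermiteCoeff_eq_zero fun T hT => ?_
  obtain ⟨T, rfl⟩ := MIdx.exists_toFinsupp_eq hT
  exact pow_eq_zero_iff two_ne_zero |>.mp (h0 T (mem_univ T))

theorem gaussMean_sub_hermiteProj_mul_self {G : MvPolynomial (Fin d) ℝ} (hG : G.totalDegree ≤ p)
    (hm : m ≤ p) : gaussMean d ((G - hermiteProj m G) * (G - hermiteProj m G))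
      = ∑ T : MIdx d p with m < T.toFinsupp.degree, hermiteCoeff T.toFinsupp G ^ 2 := by
  have hdeg : (G - hermiteProj m G).totalDegree ≤ p := (MvPolynomial.totalDegree_sub _ _).trans
    (max_le hG ((totalDegree_hermiteProj_le G).trans hm))
  rw [gaussMean_mul_self_eq_sum hdeg, sum_filter]
  refine sum_congr rfl fun T _ => ?_
  rw [map_sub, hermiteCoeff_hermiteProj]
  grind

end HermiteExpansion

section RandomFeatures

variable {d p : ℕ}

/-- The ridge polynomial `x ↦ Q(⟨w, x⟩ + b)`. -/
noncomputable def ridgePoly (w : Fin d → ℝ) (b : ℝ) (Q : Polynomial ℝ) :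
    MvPolynomial (Fin d) ℝ :=
  Polynomial.aeval (∑ i, MvPolynomial.C (w i) * MvPolynomial.X i + MvPolynomial.C b) Q

lemma eval_ridgePoly (w : Fin d → ℝ) (b : ℝ) (Q : Polynomial ℝ) (x : Fin d → ℝ) :
    MvPolynomial.eval x (ridgePoly w b Q) = Q.eval (∑ i, w i * x i + b) := by
  have hx : MvPolynomial.eval x
      (∑ i, MvPolynomial.C (w i) * MvPolynomial.X i + MvPolynomial.C b) = ∑ i, w i * x i + b := by
    simp only [map_add, map_sum, map_mul, MvPolynomial.eval_C, MvPolynomial.eval_X]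
  rw [← hx, ridgePoly, ← Polynomial.coe_aeval_eq_eval]
  exact (Polynomial.aeval_algHom_apply (MvPolynomial.aeval x) _ Q).symm

lemma pderiv_ridgePoly (w : Fin d → ℝ) (b : ℝ) (Q : Polynomial ℝ) (i : Fin d) :
    MvPolynomial.pderiv i (ridgePoly w b Q) = w i • ridgePoly w b Q.derivative := by
  simp [ridgePoly, Derivation.map_aeval, MvPolynomial.pderiv_X, Pi.single_apply, mul_comm,
    MvPolynomial.smul_eq_C_mul]

theorem gaussMean_ridgePoly_mul_hermitePoly (w : Fin d → ℝ) (b : ℝ) (Q : Polynomial ℝ)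
    (T : Fin d →₀ ℕ) : gaussMean d (ridgePoly w b Q * hermitePoly T)
      = (∏ i, w i ^ T i) * gaussMean d (ridgePoly w b (Polynomial.derivative^[T.degree] Q)) := by
  induction T using finsupp_nat_induction generalizing Q with
  | zero => simp [hermitePoly_zero]
  | add_single T i ih =>
    have hprod : ∏ j, w j ^ (T + Finsupp.single i 1 : Fin d →₀ ℕ) j = w i * ∏ j, w j ^ T j := by
      simp only [Finsupp.add_apply, pow_add, prod_mul_distrib, Finsupp.single_apply, pow_ite,
        pow_one, pow_zero, prod_ite_eq, mem_univ, if_true, mul_comm]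
    rw [gaussMean_mul_hermitePoly_add_single, pderiv_ridgePoly, smul_mul_assoc, map_smul, ih,
      degree_add_single, Function.iterate_succ_apply, hprod, smul_eq_mul, mul_assoc]

/-- The Hermite coefficient of the feature with parameters `(s w, s b)`, divided by `s ^ |T|`:
by Rodrigues' formula it equals `(T!)^{-1/2} w^T E[P^{(|T|)}(s(⟨w, x⟩ + b))]`, which also makes
sense at `s = 0`. -/
noncomputable def scaledCoeff (P : Polynomial ℝ) (s : ℝ) (T : Fin d →₀ ℕ)
    (z : (Fin d → ℝ) × ℝ) : ℝ :=
  (√(∏ i, (T i)! : ℕ))⁻¹ * ∫ x, (∏ i, z.1 i ^ T i) *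
    (Polynomial.derivative^[T.degree] P).eval (s * (∑ i, z.1 i * x i + z.2)) ∂(gaussD d)

theorem phiHat_eq_scaledCoeff (P : Polynomial ℝ) (T : Fin d →₀ ℕ) (z : (Fin d → ℝ) × ℝ) :
    phiHat d (fun y => P.eval y) z.1 z.2 T = scaledCoeff P 1 T z := by
  calc phiHat d (fun y => P.eval y) z.1 z.2 T = hermiteCoeff T (ridgePoly z.1 z.2 P) := by
        simp only [phiHat, hermiteCoeff_eq_integral, eval_ridgePoly]
    _ = scaledCoeff P 1 T z := by
        rw [hermiteCoeff_eq_inv_sqrt_mul, gaussMean_ridgePoly_mul_hermitePoly]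
        simp only [scaledCoeff, gaussMean_apply, eval_ridgePoly, one_mul, integral_const_mul]

lemma scaledCoeff_one_smul (P : Polynomial ℝ) (s : ℝ) (T : Fin d →₀ ℕ) (z : (Fin d → ℝ) × ℝ) :
    scaledCoeff P 1 T (s • z) = s ^ T.degree * scaledCoeff P s T z := by
  simp only [scaledCoeff, Prod.smul_fst, Prod.smul_snd, Pi.smul_apply, smul_eq_mul, mul_pow,
    prod_mul_distrib, prod_pow_eq_pow_sum, ← Finsupp.degree_eq_sum, one_mul, mul_assoc,
    ← mul_sum, ← mul_add, integral_const_mul]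
  ring

lemma scaledCoeff_zero (P : Polynomial ℝ) (T : Fin d →₀ ℕ) (z : (Fin d → ℝ) × ℝ) :
    scaledCoeff P 0 T z
      = (√(∏ i, (T i)! : ℕ))⁻¹ * (T.degree ! * P.coeff T.degree) * ∏ i, z.1 i ^ T i := by
  have heval : (Polynomial.derivative^[T.degree] P).eval 0 = T.degree ! * P.coeff T.degree := by
    rw [← Polynomial.coeff_zero_eq_eval_zero, Polynomial.coeff_iterate_derivative, zero_add,
      Nat.descFactorial_self, nsmul_eq_mul]
  simp only [scaledCoeff, zero_mul, heval, integral_const, probReal_univ, one_smul]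
  ring

/-- The `k`-th moment of the ridge function of `(w, b)`, weighted by `w^T`; the coefficients of
the polynomial `s ↦ scaledCoeff P s T (w, b)` are multiples of these. -/
noncomputable def ridgeMoment (T : Fin d →₀ ℕ) (k : ℕ) (z : (Fin d → ℝ) × ℝ) : ℝ :=
  ∫ x, (∏ i, z.1 i ^ T i) * (∑ i, z.1 i * x i + z.2) ^ k ∂(gaussD d)

lemma scaledCoeff_eq_sum (P : Polynomial ℝ) (s : ℝ) (T : Fin d →₀ ℕ) (z : (Fin d → ℝ) × ℝ) :
    scaledCoeff P s T z = (Polynomial.derivative^[T.degree] P).sum fun k a =>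
      (√(∏ i, (T i)! : ℕ))⁻¹ * a * s ^ k * ridgeMoment T k z := by
  have hint (k : ℕ) : Integrable (fun x => (∑ i, z.1 i * x i + z.2) ^ k) (gaussD d) := by
    simpa [eval_ridgePoly] using integrable_eval_gaussD (ridgePoly z.1 z.2 (Polynomial.X ^ k))
  simp only [scaledCoeff, ridgeMoment, Polynomial.eval_eq_sum, Polynomial.sum_def, mul_pow,
    integral_const_mul]
  rw [integral_finsetSum _ fun k _ => ((hint k).const_mul _).const_mul _, mul_sum, mul_sum]
  simp only [integral_const_mul]
  exact sum_congr rfl fun k _ => by ring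

lemma integrable_ridgeMoment_mul_ridgeMoment (v : ℝ≥0) (S T : Fin d →₀ ℕ) (k l : ℕ) :
    Integrable (fun z => ridgeMoment S k z * ridgeMoment T l z) (featMeas d v) := by
  refine integrable_integral_mul_integral (integrable_of_mem_momentAlgebra ?_)
  let A := momentAlgebra ((featMeas d v).prod ((gaussD d).prod (gaussD d)))
  have hw (i : Fin d) : (fun z : ((Fin d → ℝ) × ℝ) × (Fin d → ℝ) × (Fin d → ℝ) => z.1.1 i) ∈ A :=
    comp_mem_momentAlgebra (coord_mem_momentAlgebra_pi v i)
      (measurePreserving_fst.comp measurePreserving_fst)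
  have hb : (fun z : ((Fin d → ℝ) × ℝ) × (Fin d → ℝ) × (Fin d → ℝ) => z.1.2) ∈ A :=
    comp_mem_momentAlgebra (f := id) (e := Prod.snd ∘ Prod.fst)
      (id_mem_momentAlgebra_gaussianReal 0 v)
      (measurePreserving_snd.comp measurePreserving_fst)
  have hx (i : Fin d) : (fun z : ((Fin d → ℝ) × ℝ) × (Fin d → ℝ) × (Fin d → ℝ) => z.2.1 i) ∈ A :=
    comp_mem_momentAlgebra (coord_mem_momentAlgebra_pi 1 i)
      (measurePreserving_fst.comp measurePreserving_snd)
  have hy (i : Fin d) : (fun z : ((Fin d → ℝ) × ℝ) × (Fin d → ℝ) × (Fin d → ℝ) => z.2.2 i) ∈ A :=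
    comp_mem_momentAlgebra (coord_mem_momentAlgebra_pi 1 i)
      (measurePreserving_snd.comp measurePreserving_snd)
  convert mul_mem
    (mul_mem (prod_mem fun i (_ : i ∈ univ) => pow_mem (hw i) (S i))
      (pow_mem (add_mem (sum_mem fun i (_ : i ∈ univ) => mul_mem (hw i) (hx i)) hb) k))
    (mul_mem (prod_mem fun i (_ : i ∈ univ) => pow_mem (hw i) (T i))
      (pow_mem (add_mem (sum_mem fun i (_ : i ∈ univ) => mul_mem (hw i) (hy i)) hb) l)) using 1
  ext z
  simp

/-- The second-moment matrix of the rescaled Hermite coefficients, which is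
`Φ(s²)` with row and column `T` divided by `s ^ |T|`. -/
noncomputable def scaledPhi (d p : ℕ) (P : Polynomial ℝ) (s : ℝ) :
    Matrix (MIdx d p) (MIdx d p) ℝ := fun T T' =>
  ∫ z, scaledCoeff P s T.toFinsupp z * scaledCoeff P s T'.toFinsupp z ∂(featMeas d 1)

theorem continuous_scaledPhi (P : Polynomial ℝ) : Continuous (scaledPhi d p P) := by
  refine continuous_matrix fun T T' => ?_
  simp only [scaledPhi, scaledCoeff_eq_sum, Polynomial.sum_def, sum_mul_sum]
  simp_rw [mul_mul_mul_comm _ (ridgeMoment _ _ _)]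
  have hint (c : ℝ) (k l : ℕ) : Integrable (fun z => c *
      (ridgeMoment T.toFinsupp k z * ridgeMoment T'.toFinsupp l z)) (featMeas d 1) :=
    (integrable_ridgeMoment_mul_ridgeMoment 1 T.toFinsupp T'.toFinsupp k l).const_mul c
  simp_rw [integral_finsetSum _ fun k _ => integrable_finsetSum _ fun l _ => hint _ k l,
    integral_finsetSum _ fun l _ => hint _ _ l, integral_const_mul]
  fun_prop

lemma map_smul_featMeas (v : ℝ≥0) (s : ℝ) :
    (featMeas d v).map (s • ·) = featMeas d (NNReal.mk (s ^ 2) (sq_nonneg s) * v) := by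
  have hg : (gaussianReal 0 v).map (s * ·)
      = gaussianReal 0 (NNReal.mk (s ^ 2) (sq_nonneg s) * v) := by
    rw [gaussianReal_map_const_mul, mul_zero]
  have hpi := Measure.pi_map_pi (μ := fun _ : Fin d => gaussianReal 0 v)
    (f := fun _ y => s * y) fun _ => by fun_prop
  rw [hg] at hpi
  rw [featMeas, featMeas, ← hpi, ← hg, Measure.map_prod_map _ _ (by fun_prop) (by fun_prop)]
  rfl

lemma integral_featMeas_sq {s : ℝ} (hs : s ≠ 0) (f : (Fin d → ℝ) × ℝ → ℝ) :
    ∫ z, f z ∂(featMeas d (s ^ 2).toNNReal) = ∫ z, f (s • z) ∂(featMeas d 1) := by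
  rw [Real.toNNReal_of_nonneg (sq_nonneg s), ← mul_one (NNReal.mk _ _), ← map_smul_featMeas,
    (measurableEmbedding_const_smul₀ hs).integral_map]

theorem PhiMat_sq (P : Polynomial ℝ) {s : ℝ} (hs : s ≠ 0) :
    PhiMat d p (fun y => P.eval y) (s ^ 2)
      = diagonal (fun T : MIdx d p => s ^ T.toFinsupp.degree) * scaledPhi d p P s
        * diagonal (fun T : MIdx d p => s ^ T.toFinsupp.degree) := by
  ext T T'
  rw [mul_diagonal, diagonal_mul]
  simp only [PhiMat, ← MIdx.coe_toFinsupp, phiHat_eq_scaledCoeff, integral_featMeas_sq hs,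
    scaledCoeff_one_smul, scaledPhi]
  rw [← integral_const_mul, ← integral_mul_const]
  exact integral_congr_ae (.of_forall fun z => by ring)

lemma isHermitian_scaledPhi (P : Polynomial ℝ) (s : ℝ) : (scaledPhi d p P s).IsHermitian := by
  ext T T'
  simp only [conjTranspose_apply, star_trivial, scaledPhi, mul_comm]

/-- The multiple of the monomial `x^T` whose Gram matrix in `L²(γ_d)` is `scaledPhi d p P 0`. -/
noncomputable def limitMonomial (P : Polynomial ℝ) (T : Fin d →₀ ℕ) : MvPolynomial (Fin d) ℝ :=
  MvPolynomial.monomial T ((√(∏ i, (T i)! : ℕ))⁻¹ * (T.degree ! * P.coeff T.degree))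

lemma scaledPhi_zero_apply (P : Polynomial ℝ) (T T' : MIdx d p) : scaledPhi d p P 0 T T'
    = gaussMean d (limitMonomial P T.toFinsupp * limitMonomial P T'.toFinsupp) := by
  have heval (S : Fin d →₀ ℕ) (z : (Fin d → ℝ) × ℝ) :
      scaledCoeff P 0 S z = MvPolynomial.eval z.1 (limitMonomial P S) := by
    rw [scaledCoeff_zero, limitMonomial, MvPolynomial.eval_monomial, Finsupp.prod_fintype]
    exact fun i => pow_zero _
  simp only [scaledPhi, heval, ← map_mul, gaussMean_apply]
  refine (integral_fun_fst fun x => MvPolynomial.eval x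
    (limitMonomial P T.toFinsupp * limitMonomial P T'.toFinsupp)).trans ?_
  rw [probReal_univ, one_smul, gaussD]

theorem posDef_scaledPhi_zero {P : Polynomial ℝ} (hP : ∀ k ≤ p, P.coeff k ≠ 0) :
    (scaledPhi d p P 0).PosDef := by
  refine .of_dotProduct_mulVec_pos (isHermitian_scaledPhi P 0) fun v hv => ?_
  let G := ∑ T : MIdx d p, v T • limitMonomial P T.toFinsupp
  have hcoeff (T : MIdx d p) : G.coeff T.toFinsupp = v T *
      ((√(∏ i, (T.toFinsupp i)! : ℕ))⁻¹ * (T.toFinsupp.degree ! * P.coeff T.toFinsupp.degree)) := by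
    simp only [G, limitMonomial, MvPolynomial.coeff_sum, MvPolynomial.coeff_smul,
      MvPolynomial.coeff_monomial, MIdx.toFinsupp_injective.eq_iff, smul_eq_mul, mul_ite, mul_zero,
      sum_ite_eq', mem_univ, if_true]
  have hG : G ≠ 0 := by
    obtain ⟨T, hT⟩ := Function.ne_iff.mp hv
    refine MvPolynomial.ne_zero_iff.mpr ⟨T.toFinsupp, (hcoeff T).trans_ne <| mul_ne_zero hT ?_⟩
    exact mul_ne_zero (inv_pos.mpr (sqrt_prod_factorial_pos _)).ne'
      (mul_ne_zero (Nat.cast_ne_zero.mpr (Nat.factorial_ne_zero _)) (hP _ T.degree_toFinsupp_le))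
  have hform : star v ⬝ᵥ scaledPhi d p P 0 *ᵥ v = gaussMean d (G * G) := by
    simp only [G, sum_mul_sum, map_sum, smul_mul_smul_comm, map_smul, smul_eq_mul]
    simp only [dotProduct, mulVec, star_trivial, scaledPhi_zero_apply, mul_sum]
    exact sum_congr rfl fun T _ => sum_congr rfl fun T' _ => by ring
  exact hform ▸ gaussMean_mul_self_pos hG

end RandomFeatures

section PositiveQuadraticForms

variable {n : Type*} [Fintype n]

theorem eventually_forall_dotProduct_mulVec_pos {A : Matrix n n ℝ}
    (hA : ∀ v ≠ 0, 0 < v ⬝ᵥ A *ᵥ v) : ∀ᶠ B in 𝓝 A, ∀ v ≠ 0, 0 < v ⬝ᵥ B *ᵥ v := by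
  have hsphere : ∀ᶠ B in 𝓝 A, ∀ u ∈ Metric.sphere (0 : n → ℝ) 1, 0 < u ⬝ᵥ B *ᵥ u := by
    refine (isCompact_sphere 0 1).eventually_forall_of_forall_eventually fun u hu => ?_
    have hcont : Continuous fun z : Matrix n n ℝ × (n → ℝ) => z.2 ⬝ᵥ z.1 *ᵥ z.2 := by fun_prop
    exact hcont.continuousAt.eventually (lt_mem_nhds (hA u (ne_zero_of_mem_unit_sphere ⟨u, hu⟩)))
  filter_upwards [hsphere] with B hB v hv
  have hu := hB (‖v‖⁻¹ • v) (mem_sphere_zero_iff_norm.mpr (norm_smul_inv_norm hv))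
  rw [mulVec_smul, smul_dotProduct, dotProduct_smul] at hu
  exact pos_of_smul_pos_left (pos_of_smul_pos_left hu (by positivity)) (by positivity)

theorem exists_eventually_dotProduct_mulVec_equiv {A : Matrix n n ℝ}
    (hA : ∀ v ≠ 0, 0 < v ⬝ᵥ A *ᵥ v) : ∃ C > 0, ∀ᶠ B in 𝓝 A, ∀ v,
      v ⬝ᵥ v ≤ C * (v ⬝ᵥ B *ᵥ v) ∧ v ⬝ᵥ B *ᵥ v ≤ C * (v ⬝ᵥ v) := by
  classical
  have hlower : ∀ᶠ z : ℝ × Matrix n n ℝ in 𝓝 (0, A), ∀ v ≠ 0, 0 < v ⬝ᵥ (z.2 - z.1 • 1) *ᵥ v := by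
    have hcont : Continuous fun z : ℝ × Matrix n n ℝ => z.2 - z.1 • 1 := by fun_prop
    refine hcont.continuousAt.eventually (eventually_forall_dotProduct_mulVec_pos ?_)
    simpa using hA
  have hupper : ∀ᶠ z : ℝ × Matrix n n ℝ in 𝓝 (0, A), ∀ v ≠ 0, 0 < v ⬝ᵥ (1 - z.1 • z.2) *ᵥ v := by
    have hcont : Continuous fun z : ℝ × Matrix n n ℝ => 1 - z.1 • z.2 := by fun_prop
    refine hcont.continuousAt.eventually (eventually_forall_dotProduct_mulVec_pos ?_)
    simpa using fun v : n → ℝ => (dotProduct_star_self_pos_iff (v := v)).mpr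
  obtain ⟨t, ht, ht0⟩ := ((hlower.and hupper).curry_nhds.filter_mono nhdsWithin_le_nhds |>.and
    (self_mem_nhdsWithin (s := Set.Ioi (0 : ℝ)))).exists
  refine ⟨t⁻¹, inv_pos.mpr ht0, ht.mono fun B hB v => ?_⟩
  rcases eq_or_ne v 0 with rfl | hv
  · simp only [zero_dotProduct, mul_zero, le_refl, and_self]
  · have hlt := hB.1 v hv
    have hgt := hB.2 v hv
    simp only [sub_mulVec, smul_mulVec, one_mulVec, dotProduct_sub, dotProduct_smul, smul_eq_mul,
      sub_pos] at hlt hgt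
    rw [le_inv_mul_iff₀ ht0, le_inv_mul_iff₀ ht0]
    exact ⟨hlt.le, hgt.le⟩

lemma dotProduct_inv_diagonal_mul_mul_diagonal_mulVec [DecidableEq n] (A : Matrix n n ℝ)
    {D : n → ℝ} (hD : ∀ i, D i ≠ 0) (v : n → ℝ) :
    v ⬝ᵥ (diagonal D * A * diagonal D)⁻¹ *ᵥ v = (v / D) ⬝ᵥ A⁻¹ *ᵥ (v / D) := by
  have hinv : (diagonal D)⁻¹ = diagonal D⁻¹ := by
    refine inv_eq_right_inv ?_
    rw [diagonal_mul_diagonal, ← diagonal_one]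
    exact congrArg _ (funext fun i => mul_inv_cancel₀ (hD i))
  have hright : diagonal D⁻¹ *ᵥ v = v / D :=
    funext fun i => (mulVec_diagonal _ _ _).trans (inv_mul_eq_div _ _)
  have hleft : v ᵥ* diagonal D⁻¹ = v / D :=
    funext fun i => (vecMul_diagonal _ _ _).trans (div_eq_mul_inv _ _).symm
  rw [Matrix.mul_inv_rev, Matrix.mul_inv_rev, hinv, ← mulVec_mulVec, ← mulVec_mulVec, hright,
    dotProduct_mulVec, hleft]

end PositiveQuadraticForms

section WeightedNorm

variable {d p : ℕ}

/-- The weighted squared norm `Σ_T v_T² / ε ^ |T|`, the model for the quadratic form of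
`Φ(ε)⁻¹` as `ε → 0`. -/
noncomputable def weightedSq (ε : ℝ) (v : MIdx d p → ℝ) : ℝ :=
  ∑ T, v T ^ 2 / ε ^ T.toFinsupp.degree

lemma dotProduct_div_pow_degree_self {ε s : ℝ} (hs : s ^ 2 = ε) (v : MIdx d p → ℝ) :
    (v / fun T => s ^ T.toFinsupp.degree) ⬝ᵥ (v / fun T => s ^ T.toFinsupp.degree)
      = weightedSq ε v := by
  simp only [dotProduct, weightedSq, Pi.div_apply, ← hs, ← sq, div_pow, pow_right_comm]

lemma eventually_posDef_scaledPhi {P : Polynomial ℝ} (hP : ∀ k ≤ p, P.coeff k ≠ 0) :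
    ∀ᶠ s in 𝓝 0, (scaledPhi d p P s).PosDef := by
  filter_upwards [(continuous_scaledPhi P).continuousAt.eventually
    (eventually_forall_dotProduct_mulVec_pos fun v =>
      (posDef_scaledPhi_zero (d := d) hP).dotProduct_mulVec_pos)] with s hs
  exact .of_dotProduct_mulVec_pos (isHermitian_scaledPhi P s) hs

lemma continuousAt_inv_scaledPhi {P : Polynomial ℝ} (hP : ∀ k ≤ p, P.coeff k ≠ 0) :
    ContinuousAt (fun s => (scaledPhi d p P s)⁻¹) 0 := by
  refine ContinuousAt.comp (f := scaledPhi d p P) (continuousAt_matrix_inv _ ?_)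
    (continuous_scaledPhi P).continuousAt
  rw [Ring.inverse_eq_inv']
  exact continuousAt_inv₀ (posDef_scaledPhi_zero hP).det_pos.ne'

theorem exists_eventually_PhiMat_inv_equiv {P : Polynomial ℝ} (hP : ∀ k ≤ p, P.coeff k ≠ 0) :
    ∃ C > 0, ∀ᶠ ε in 𝓝[>] 0, (PhiMat d p (fun y => P.eval y) ε).PosDef ∧ ∀ v,
      weightedSq ε v ≤ C * (v ⬝ᵥ (PhiMat d p (fun y => P.eval y) ε)⁻¹ *ᵥ v) ∧
      v ⬝ᵥ (PhiMat d p (fun y => P.eval y) ε)⁻¹ *ᵥ v ≤ C * weightedSq ε v := by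
  obtain ⟨C, hC, hequiv⟩ := exists_eventually_dotProduct_mulVec_equiv fun v =>
    (posDef_scaledPhi_zero (d := d) hP).inv.dotProduct_mulVec_pos
  have hsqrt : Tendsto Real.sqrt (𝓝[>] 0) (𝓝 0) :=
    (Real.sqrt_zero ▸ Real.continuous_sqrt.tendsto 0).mono_left nhdsWithin_le_nhds
  refine ⟨C, hC, ?_⟩
  filter_upwards [hsqrt.eventually (eventually_posDef_scaledPhi (d := d) hP),
    hsqrt.eventually ((continuousAt_inv_scaledPhi hP).eventually hequiv),
    self_mem_nhdsWithin] with ε hpos hbound hε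
  have hs : √ε ≠ 0 := (Real.sqrt_pos.mpr hε).ne'
  have hsq : √ε ^ 2 = ε := Real.sq_sqrt hε.le
  have hΦ := PhiMat_sq (d := d) (p := p) P hs
  rw [hsq] at hΦ
  rw [hΦ]
  refine ⟨?_, fun v => ?_⟩
  · have hD : IsUnit (diagonal fun T : MIdx d p => √ε ^ T.toFinsupp.degree) :=
      isUnit_diagonal.mpr (Pi.isUnit_iff.mpr fun T => (pow_ne_zero _ hs).isUnit)
    simpa only [star_eq_conjTranspose, diagonal_conjTranspose, star_trivial] using
      (IsUnit.posDef_star_right_conjugate_iff hD).mpr hpos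
  · rw [dotProduct_inv_diagonal_mul_mul_diagonal_mulVec _ fun T => pow_ne_zero _ hs,
      ← dotProduct_div_pow_degree_self hsq]
    exact hbound _

end WeightedNorm

section Minimizer

theorem exists_forall_ne_apply_sub_self_lt {E : Type*} [AddCommGroup E] [Module ℝ E]
    {B : LinearMap.BilinForm ℝ E} (hB : B.IsSymm) {V : Submodule ℝ E} [Module.Finite ℝ V]
    (hpos : ∀ v ∈ V, v ≠ 0 → 0 < B v v) (f : E) :
    ∃ v ∈ V, ∀ u ∈ V, u ≠ v → B (f - v) (f - v) < B (f - u) (f - u) := by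
  let toDual : V →ₗ[ℝ] Module.Dual ℝ V := B.restrict V
  have hinj : Function.Injective toDual := by
    refine (injective_iff_map_eq_zero toDual).mpr fun v hv => ?_
    by_contra hv0
    exact (hpos v v.2 (Submodule.coe_eq_zero.not.mpr hv0)).ne' (LinearMap.congr_fun hv v)
  obtain ⟨⟨v, hv⟩, hproj⟩ := (LinearMap.injective_iff_surjective_of_finrank_eq_finrank
    Subspace.dual_finrank_eq.symm).mp hinj (B f ∘ₗ V.subtype)
  have horth (u : E) (hu : u ∈ V) : B (f - v) u = 0 := by
    rw [map_sub, LinearMap.sub_apply, sub_eq_zero]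
    exact (LinearMap.congr_fun hproj ⟨u, hu⟩).symm
  refine ⟨v, hv, fun u hu huv => ?_⟩
  have hw : v - u ∈ V := V.sub_mem hv hu
  have horth' : B (v - u) (f - v) = 0 := (hB.eq (f - v) (v - u)).symm.trans (horth _ hw)
  calc B (f - v) (f - v) < B (f - v) (f - v) + B (v - u) (v - u) :=
        lt_add_of_pos_right _ (hpos _ hw (sub_ne_zero.mpr huv.symm))
    _ = B ((f - v) + (v - u)) ((f - v) + (v - u)) := by
        rw [map_add (B _), map_add B, LinearMap.add_apply, LinearMap.add_apply, horth _ hw,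
          horth', zero_add, add_zero]
    _ = B (f - u) (f - u) := by rw [sub_add_sub_cancel]

variable {d p : ℕ}

/-- The direction of the affine space `interpPolys d p U F`: the polynomials of degree at most
`p` vanishing on `Uᶜ`. -/
def vanishingPolys (d p : ℕ) (U : Set (Fin d → ℝ)) : Submodule ℝ (MvPolynomial (Fin d) ℝ) where
  carrier := interpPolys d p U 0
  zero_mem' := ⟨by simp, fun _ _ => rfl⟩
  add_mem' hG hH := ⟨(MvPolynomial.totalDegree_add _ _).trans (max_le hG.1 hH.1), fun x hx => by
    simp [hG.2 x hx, hH.2 x hx]⟩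
  smul_mem' c G hG := ⟨(MvPolynomial.totalDegree_smul_le _ _).trans hG.1, fun x hx => by
    simp [hG.2 x hx]⟩

lemma sub_mem_vanishingPolys_iff {U : Set (Fin d → ℝ)} {F G : MvPolynomial (Fin d) ℝ}
    (hF : F.totalDegree ≤ p) : F - G ∈ vanishingPolys d p U ↔ G ∈ interpPolys d p U F := by
  refine ⟨fun h => ⟨?_, fun x hx => ?_⟩, fun h => ⟨?_, fun x hx => ?_⟩⟩
  · rw [← sub_sub_cancel F G]
    exact (MvPolynomial.totalDegree_sub _ _).trans (max_le hF h.1)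
  · have hzero := h.2 x hx
    rw [map_sub, map_zero, sub_eq_zero] at hzero
    exact hzero.symm
  · exact (MvPolynomial.totalDegree_sub _ _).trans (max_le hF h.1)
  · rw [map_sub, map_zero, h.2 x hx, sub_self]

instance (U : Set (Fin d → ℝ)) : Module.Finite ℝ (vanishingPolys d p U) :=
  Submodule.finiteDimensional_of_le (S₂ := MvPolynomial.restrictTotalDegree (Fin d) ℝ p)
    fun _ hG => (MvPolynomial.mem_restrictTotalDegree _ _ _).mpr hG.1

lemma hermVec_apply (G : MvPolynomial (Fin d) ℝ) (T : MIdx d p) :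
    hermVec d p G T = hermiteCoeff T.toFinsupp G := by
  rw [hermVec, hermiteCoeff_eq_integral, MIdx.coe_toFinsupp]

/-- The bilinear form on polynomials whose quadratic form is `quadForm d p σ ε`. -/
noncomputable def quadBilin (d p : ℕ) (σ : ℝ → ℝ) (ε : ℝ) :
    LinearMap.BilinForm ℝ (MvPolynomial (Fin d) ℝ) :=
  (toBilin' (PhiMat d p σ ε)⁻¹).comp (LinearMap.pi fun T => hermiteCoeff T.toFinsupp)
    (LinearMap.pi fun T => hermiteCoeff T.toFinsupp)

lemma quadBilin_apply (σ : ℝ → ℝ) (ε : ℝ) (G H : MvPolynomial (Fin d) ℝ) :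
    quadBilin d p σ ε G H = hermVec d p G ⬝ᵥ (PhiMat d p σ ε)⁻¹ *ᵥ hermVec d p H := by
  have hvec (G : MvPolynomial (Fin d) ℝ) :
      LinearMap.pi (fun T : MIdx d p => hermiteCoeff T.toFinsupp) G = hermVec d p G :=
    funext fun T => (hermVec_apply G T).symm
  rw [quadBilin, LinearMap.BilinForm.comp_apply, toBilin'_apply', hvec, hvec]

lemma quadBilin_isSymm {σ : ℝ → ℝ} {ε : ℝ} (hΦ : (PhiMat d p σ ε).PosDef) :
    (quadBilin d p σ ε).IsSymm := by
  refine ⟨fun G H => ?_⟩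
  have hsymm : ((PhiMat d p σ ε)⁻¹)ᵀ = (PhiMat d p σ ε)⁻¹ := hΦ.inv.isHermitian
  rw [quadBilin_apply, quadBilin_apply, dotProduct_mulVec, ← mulVec_transpose,
    hsymm, dotProduct_comm]

lemma hermVec_ne_zero {G : MvPolynomial (Fin d) ℝ} (hG : G.totalDegree ≤ p) (hG0 : G ≠ 0) :
    hermVec d p G ≠ 0 := by
  contrapose! hG0
  refine eq_zero_of_hermiteCoeff_eq_zero fun T hT => ?_
  obtain ⟨T, rfl⟩ := MIdx.exists_toFinsupp_eq (hT.trans hG)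
  rw [← hermVec_apply, hG0, Pi.zero_apply]

theorem exists_unique_quadForm_minimizer {σ : ℝ → ℝ} {ε : ℝ} (hΦ : (PhiMat d p σ ε).PosDef)
    (U : Set (Fin d → ℝ)) {F : MvPolynomial (Fin d) ℝ} (hF : F.totalDegree ≤ p) :
    ∃ G ∈ interpPolys d p U F,
      (∀ G' ∈ interpPolys d p U F, quadForm d p σ ε G ≤ quadForm d p σ ε G') ∧
      ∀ G'' ∈ interpPolys d p U F,
        (∀ G' ∈ interpPolys d p U F, quadForm d p σ ε G'' ≤ quadForm d p σ ε G') → G'' = G := by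
  have hpos (v) (hv : v ∈ vanishingPolys d p U) (hv0 : v ≠ 0) : 0 < quadBilin d p σ ε v v := by
    rw [quadBilin_apply]
    exact hΦ.inv.dotProduct_mulVec_pos (hermVec_ne_zero hv.1 hv0)
  obtain ⟨v, hv, hlt⟩ := exists_forall_ne_apply_sub_self_lt (quadBilin_isSymm hΦ) hpos F
  have hmin (G) (hG : G ∈ interpPolys d p U F) (hne : G ≠ F - v) :
      quadForm d p σ ε (F - v) < quadForm d p σ ε G := by
    have h := hlt (F - G) ((sub_mem_vanishingPolys_iff hF).mpr hG)
      fun h => hne (by rw [← h, sub_sub_cancel])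
    rwa [sub_sub_cancel, quadBilin_apply, quadBilin_apply] at h
  have hmem : F - v ∈ interpPolys d p U F :=
    (sub_mem_vanishingPolys_iff hF).mp (by rwa [sub_sub_cancel])
  refine ⟨F - v, hmem, fun G hG => ?_, fun G hG hGmin => ?_⟩
  · rcases eq_or_ne G (F - v) with rfl | hne
    · exact le_rfl
    · exact (hmin G hG hne).le
  · by_contra hne
    exact (hmin G hG hne).not_ge (hGmin _ hmem)

end Minimizer

section CoefficientDecay

variable {d p m : ℕ} {ε : ℝ}

lemma weightedSq_hermVec_le (hε : 0 < ε) (hε1 : ε ≤ 1) {H : MvPolynomial (Fin d) ℝ}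
    (hH : H.totalDegree ≤ m) :
    weightedSq ε (hermVec d p H) ≤ (∑ T, hermVec d p H T ^ 2) / ε ^ m := by
  rw [weightedSq, sum_div]
  refine sum_le_sum fun T _ => ?_
  rcases le_or_gt T.toFinsupp.degree m with hT | hT
  · gcongr _ / ?_
    exact pow_le_pow_of_le_one hε.le hε1 hT
  · rw [hermVec_apply, hermiteCoeff_of_totalDegree_lt (hH.trans_lt hT), zero_pow two_ne_zero,
      zero_div, zero_div]

lemma sum_sq_le_pow_mul_weightedSq (hε : 0 < ε) (hε1 : ε ≤ 1) (k : ℕ) (v : MIdx d p → ℝ) :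
    ∑ T with k ≤ T.toFinsupp.degree, v T ^ 2 ≤ ε ^ k * weightedSq ε v := by
  rw [weightedSq, mul_sum]
  refine (sum_le_sum fun T hT => ?_).trans
    (sum_le_univ_sum_of_nonneg fun T => by positivity)
  rw [mul_div_left_comm]
  exact le_mul_of_one_le_right (sq_nonneg _)
    ((one_le_div (by positivity)).mpr (pow_le_pow_of_le_one hε.le hε1 (mem_filter.mp hT).2))

theorem exists_eventually_sum_hermiteCoeff_sq_le {P : Polynomial ℝ}
    (hP : ∀ k ≤ p, P.coeff k ≠ 0) {H : MvPolynomial (Fin d) ℝ} (hH : H.totalDegree ≤ m) :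
    ∃ C > 0, ∀ᶠ ε in 𝓝[>] 0, (PhiMat d p (fun y => P.eval y) ε).PosDef ∧
      ∀ G, quadForm d p (fun y => P.eval y) ε G ≤ quadForm d p (fun y => P.eval y) ε H →
        ∀ k ≥ m, ∑ T : MIdx d p with k ≤ T.toFinsupp.degree, hermiteCoeff T.toFinsupp G ^ 2
          ≤ C * ε ^ (k - m) := by
  obtain ⟨C, hC, hequiv⟩ := exists_eventually_PhiMat_inv_equiv (d := d) hP
  set S := ∑ T : MIdx d p, hermVec d p H T ^ 2
  have : 0 ≤ S := sum_nonneg fun T _ => sq_nonneg _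
  refine ⟨C * (C * (S + 1)), by positivity, ?_⟩
  filter_upwards [hequiv, Ioc_mem_nhdsGT one_pos] with ε ⟨hΦ, hbound⟩ ⟨hε, hε1⟩
  refine ⟨hΦ, fun G hG k hk => ?_⟩
  have hweighted : weightedSq ε (hermVec d p G) ≤ C * (C * (S + 1)) / ε ^ m := by
    calc weightedSq ε (hermVec d p G)
        ≤ C * quadForm d p (fun y => P.eval y) ε G := (hbound _).1
      _ ≤ C * quadForm d p (fun y => P.eval y) ε H := by gcongr
      _ ≤ C * (C * weightedSq ε (hermVec d p H)) := by gcongr; exact (hbound _).2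
      _ ≤ C * (C * ((S + 1) / ε ^ m)) := by
        gcongr
        refine (weightedSq_hermVec_le hε hε1 hH).trans ?_
        gcongr
        exact le_add_of_nonneg_right zero_le_one
      _ = C * (C * (S + 1)) / ε ^ m := by ring
  calc ∑ T : MIdx d p with k ≤ T.toFinsupp.degree, hermiteCoeff T.toFinsupp G ^ 2
      = ∑ T : MIdx d p with k ≤ T.toFinsupp.degree, hermVec d p G T ^ 2 := by
        simp only [hermVec_apply]
    _ ≤ ε ^ k * weightedSq ε (hermVec d p G) := sum_sq_le_pow_mul_weightedSq hε hε1 k _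
    _ ≤ ε ^ k * (C * (C * (S + 1)) / ε ^ m) := by gcongr
    _ = C * (C * (S + 1)) * ε ^ (k - m) := by
        rw [pow_sub₀ _ hε.ne' hk]
        ring

lemma sum_ite_sum_eq_hermiteCoeff_sq_le {k : ℕ} (hk : k ≤ p) (G : MvPolynomial (Fin d) ℝ) :
    (∑ T : Fin d → Fin (p + 1), if (∑ i, (T i : ℕ)) = k then
        (∫ x, MvPolynomial.eval x G * chiH (fun i => (T i : ℕ)) x ∂(gaussD d)) ^ 2 else 0)
      ≤ ∑ T : MIdx d p with k ≤ T.toFinsupp.degree, hermiteCoeff T.toFinsupp G ^ 2 := by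
  rw [← sum_filter]
  calc _ = ∑ T : MIdx d p with T.toFinsupp.degree = k, hermiteCoeff T.toFinsupp G ^ 2 := by
        refine (sum_nbij Subtype.val (fun T hT => ?_) Subtype.val_injective.injOn
          (fun T hT => ?_) fun T _ => ?_).symm
        · exact mem_filter.mpr
            ⟨mem_univ _, (MIdx.degree_toFinsupp T).symm.trans (mem_filter.mp hT).2⟩
        · have hTk := (mem_filter.mp hT).2
          exact ⟨⟨T, hTk.trans_le hk⟩,
            mem_coe.mpr (mem_filter.mpr ⟨mem_univ _, (MIdx.degree_toFinsupp _).trans hTk⟩), rfl⟩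
        · rw [hermiteCoeff_eq_integral]
          rfl
    _ ≤ _ := sum_le_sum_of_subset_of_nonneg
        (monotone_filter_right _ fun T _ hT => hT.ge) fun T _ _ => sq_nonneg _

lemma exists_mem_interpPolys_totalDegree_eq (U : Set (Fin d → ℝ)) {F : MvPolynomial (Fin d) ℝ}
    (hF : F.totalDegree ≤ p) :
    ∃ H ∈ interpPolys d p U F, H.totalDegree = minInterpDeg d p U F :=
  Nat.sInf_mem (s := {k | ∃ G ∈ interpPolys d p U F, G.totalDegree = k})
    ⟨F.totalDegree, F, ⟨hF, fun _ _ => rfl⟩, rfl⟩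

lemma integral_sub_hermiteProj_sq {G : MvPolynomial (Fin d) ℝ} (hG : G.totalDegree ≤ p)
    (hm : m ≤ p) :
    ∫ x, (MvPolynomial.eval x G - MvPolynomial.eval x (hermiteProj m G)) ^ 2 ∂(gaussD d)
      = ∑ T : MIdx d p with m < T.toFinsupp.degree, hermiteCoeff T.toFinsupp G ^ 2 := by
  rw [← gaussMean_sub_hermiteProj_mul_self hG hm, gaussMean_apply]
  simp only [map_mul, map_sub, sq]

end CoefficientDecay

lemma exists_polynomial_coeff_ne_zero_and_eq_eval {p : ℕ} {σ : ℝ → ℝ} {cf : Fin (p + 1) → ℝ}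
    (hcf : ∀ k, cf k ≠ 0) (hσ : ∀ y, σ y = ∑ k : Fin (p + 1), cf k * y ^ (k : ℕ)) :
    ∃ P : Polynomial ℝ, (∀ k ≤ p, P.coeff k ≠ 0) ∧ σ = fun y => P.eval y := by
  refine ⟨∑ k : Fin (p + 1), Polynomial.monomial k (cf k), fun k hk => ?_, funext fun y => ?_⟩
  · rw [Polynomial.finsetSum_coeff, sum_eq_single ⟨k, Nat.lt_succ_of_le hk⟩]
    · simpa using hcf _
    · exact fun j _ hj => Polynomial.coeff_monomial_of_ne _ fun h => hj (Fin.ext h.symm)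
    · exact fun h => (h (mem_univ _)).elim
  · simp only [hσ, Polynomial.eval_finsetSum, Polynomial.eval_monomial]

theorem stmt1_general (d p : ℕ) (P : Polynomial ℝ) (hP : ∀ k ≤ p, P.coeff k ≠ 0)
    (F : MvPolynomial (Fin d) ℝ) (hF : F.totalDegree ≤ p) (U : Set (Fin d → ℝ)) :
    (∃ C > (0 : ℝ), ∃ ε₀ > (0 : ℝ), ∀ ε : ℝ, 0 < ε → ε < ε₀ →
      (PhiMat d p (fun y => P.eval y) ε).PosDef ∧
      (∃ G ∈ interpPolys d p U F,
        (∀ G' ∈ interpPolys d p U F,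
          quadForm d p (fun y => P.eval y) ε G ≤ quadForm d p (fun y => P.eval y) ε G') ∧
        ∀ G'' ∈ interpPolys d p U F,
          (∀ G' ∈ interpPolys d p U F,
            quadForm d p (fun y => P.eval y) ε G'' ≤ quadForm d p (fun y => P.eval y) ε G') →
          G'' = G) ∧
      (∀ G ∈ interpPolys d p U F,
        (∀ G' ∈ interpPolys d p U F,
          quadForm d p (fun y => P.eval y) ε G ≤ quadForm d p (fun y => P.eval y) ε G') →
        ∀ k : ℕ, minInterpDeg d p U F < k → k ≤ p →
          (∑ T : Fin d → Fin (p + 1),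
              if (∑ i, (T i : ℕ)) = k then
                (∫ x, MvPolynomial.eval x G *
                    chiH (fun i => (T i : ℕ)) x ∂(gaussD d)) ^ 2
              else 0)
            ≤ C * ε ^ (k - minInterpDeg d p U F))) ∧
    (∀ δ : ℝ, 0 < δ → ∃ ε₁ > (0 : ℝ), ∀ ε : ℝ, 0 < ε → ε < ε₁ →
      ∀ G ∈ interpPolys d p U F,
        (∀ G' ∈ interpPolys d p U F,
          quadForm d p (fun y => P.eval y) ε G ≤ quadForm d p (fun y => P.eval y) ε G') →
        ∃ h : MvPolynomial (Fin d) ℝ, h.totalDegree ≤ minInterpDeg d p U F ∧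
          Real.sqrt (∫ x, (MvPolynomial.eval x G - MvPolynomial.eval x h) ^ 2
              ∂(gaussD d)) ≤ δ) := by
  obtain ⟨H, hH, hHdeg⟩ := exists_mem_interpPolys_totalDegree_eq U hF
  obtain ⟨C, hC, hdecay⟩ := exists_eventually_sum_hermiteCoeff_sq_le hP hHdeg.le
  refine ⟨⟨C, hC, ?_⟩, fun δ hδ => ?_⟩
  · obtain ⟨ε₀, hε₀, hsub⟩ := mem_nhdsGT_iff_exists_Ioo_subset.mp hdecay
    refine ⟨ε₀, hε₀, fun ε hε hlt => ?_⟩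
    obtain ⟨hΦ, htail⟩ := hsub ⟨hε, hlt⟩
    exact ⟨hΦ, exists_unique_quadForm_minimizer hΦ U hF, fun G _ hmin k hk hkp =>
      (sum_ite_sum_eq_hermiteCoeff_sq_le hkp G).trans (htail G (hmin H hH) k hk.le)⟩
  · have hsmall : ∀ᶠ ε in 𝓝[>] 0, C * ε < δ ^ 2 :=
      nhdsWithin_le_nhds <| (continuous_const_mul C).tendsto' 0 0 (mul_zero C)
        |>.eventually_lt_const (by positivity)
    obtain ⟨ε₁, hε₁, hsub⟩ := mem_nhdsGT_iff_exists_Ioo_subset.mp (hdecay.and hsmall)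
    refine ⟨ε₁, hε₁, fun ε hε hlt G hG hmin => ⟨_, totalDegree_hermiteProj_le G, ?_⟩⟩
    obtain ⟨⟨-, htail⟩, hCε⟩ := hsub ⟨hε, hlt⟩
    have hsum := htail G (hmin H hH) (minInterpDeg d p U F + 1) (Nat.le_succ _)
    rw [Nat.add_sub_cancel_left, pow_one] at hsum
    rw [integral_sub_hermiteProj_sq hG.1 (hHdeg.ge.trans hH.1)]
    exact Real.sqrt_le_iff.mpr ⟨hδ.le, hsum.trans hCε.le⟩

/-- under Assumption A, there are `C > 0` and `ε₀ > 0` such that for all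
`ε ∈ (0, ε₀)`: `Φ(ε)` is positive definite, the minimizer `g_ε` of `ĝᵀ Φ(ε)⁻¹ ĝ`
over `F_int` exists and is unique, and every minimizer satisfies, for all
`p* < k ≤ p`, `Σ_{|T| = k} ⟨g_ε, χ_T⟩² ≤ C ε^{k − p*}`.  In particular, the
`L²(γ_d)`-distance from `g_ε` to `Π_{p*}(ℝ^d)` tends to `0` as `ε → 0`. -/
theorem stmt1 (d p : ℕ) (hd : 1 ≤ d) (hp : 1 ≤ p)
    (σ : ℝ → ℝ) (cf : Fin (p + 1) → ℝ) (hcf : ∀ k, cf k ≠ 0)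
    (hσ : ∀ y, σ y = ∑ k : Fin (p + 1), cf k * y ^ (k : ℕ))
    (F : MvPolynomial (Fin d) ℝ) (hF : F.totalDegree ≤ p)
    (U : Set (Fin d → ℝ)) (hU : U ≠ Set.univ) :
    (∃ C > (0 : ℝ), ∃ ε₀ > (0 : ℝ), ∀ ε : ℝ, 0 < ε → ε < ε₀ →
      (PhiMat d p σ ε).PosDef ∧
      (∃ G ∈ interpPolys d p U F,
        (∀ G' ∈ interpPolys d p U F, quadForm d p σ ε G ≤ quadForm d p σ ε G') ∧
        ∀ G'' ∈ interpPolys d p U F,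
          (∀ G' ∈ interpPolys d p U F, quadForm d p σ ε G'' ≤ quadForm d p σ ε G') →
          G'' = G) ∧
      (∀ G ∈ interpPolys d p U F,
        (∀ G' ∈ interpPolys d p U F, quadForm d p σ ε G ≤ quadForm d p σ ε G') →
        ∀ k : ℕ, minInterpDeg d p U F < k → k ≤ p →
          (∑ T : Fin d → Fin (p + 1),
              if (∑ i, (T i : ℕ)) = k then
                (∫ x, MvPolynomial.eval x G *
                    chiH (fun i => (T i : ℕ)) x ∂(gaussD d)) ^ 2
              else 0)
            ≤ C * ε ^ (k - minInterpDeg d p U F))) ∧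
    (∀ δ : ℝ, 0 < δ → ∃ ε₁ > (0 : ℝ), ∀ ε : ℝ, 0 < ε → ε < ε₁ →
      ∀ G ∈ interpPolys d p U F,
        (∀ G' ∈ interpPolys d p U F, quadForm d p σ ε G ≤ quadForm d p σ ε G') →
        ∃ h : MvPolynomial (Fin d) ℝ, h.totalDegree ≤ minInterpDeg d p U F ∧
          Real.sqrt (∫ x, (MvPolynomial.eval x G - MvPolynomial.eval x h) ^ 2
              ∂(gaussD d)) ≤ δ) := by
  obtain ⟨P, hP, rfl⟩ := exists_polynomial_coeff_ne_zero_and_eq_eval hcf hσ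
  exact stmt1_general d p P hP F hF U
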